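/- Semigroup property of the Poisson-type kernel: For all t₁, t₂ > 0, ℙ_{t₁} ∗ ℙ_{t₂} = ℙ_{t₁ + t₂}, where the convolution is taken in the sense of matrix multiplication, i.e. for every x ∈ ℝ^d and all j, k ∈ {1, …, d+1}, Σ_{ℓ=1}^{d+1} ∫_{ℝ^d} 𝔭_{t₁}^{jℓ}(y) 𝔭_{t₂}^{ℓk}(x − y) dy = 𝔭_{t₁+t₂}^{jk}(x). -/

import Mathlib

open MeasureTheory Filter Set
open scoped ENNReal NNReal Topology

noncomputable section

abbrev Ed (d : ℕ) : Type := EuclideanSpace ℝ (Fin d)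

/-- The surface measure `ω_d` of the unit sphere in `ℝ^{d+1}`. -/
def sphereVol (d : ℕ) : ℝ :=
  ((d : ℝ) + 1) * (volume (Metric.ball (0 : EuclideanSpace ℝ (Fin (d+1))) 1)).toReal

/-- The Poisson kernel `p_t(x)` for the upper half-space `ℝ^d × (0,∞)`. -/
def poissonKernelEd (d : ℕ) (t : ℝ) (x : Ed d) : ℝ :=
  (2 / sphereVol d) * t / (‖x‖ ^ 2 + t ^ 2) ^ (((d : ℝ) + 1) / 2)

/-- The (componentwise) Poisson integral `u(x,t) = (p_t ∗ f)(x)` of a vector field. -/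
def poissonInt (d m : ℕ) (f : Ed d → Ed m) (x : Ed d) (t : ℝ) : Ed m :=
  ∫ y, poissonKernelEd d t y • f (x - y)

/-- The vector `(x, t) ∈ ℝ^{d+1}`. -/
def snocVec (d : ℕ) (x : Ed d) (t : ℝ) : Fin (d + 1) → ℝ := Fin.snoc (fun i => x i) t

/-- The entries `𝔭_t^{jk}(x)` of the Poisson-type matrix kernel `ℙ_t`. -/
def pEntry (d : ℕ) (t : ℝ) (j k : Fin (d + 1)) (x : Ed d) : ℝ :=
  (2 * ((d : ℝ) + 1) / sphereVol d) * t * snocVec d x t j *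
    snocVec d x t k / (‖x‖ ^ 2 + t ^ 2) ^ (((d : ℝ) + 3) / 2)

def jf (t μ n v : ℝ) : ℝ := v ^ n * Real.exp (-(v * t ^ 2 + μ ^ 2 / v))

lemma jf_meas (t μ n : ℝ) : Measurable (jf t μ n) := by unfold jf; fun_prop

lemma jf_int_of (t μ n : ℝ) (ht : 0 < t) (hn : -1 < n) :
    IntegrableOn (jf t μ n) (Ioi 0) := by
  have h := integrableOn_rpow_mul_exp_neg_mul_rpow (p := 1) (s := n) (b := t ^ 2) hn one_pos
    (by positivity)
  refine Integrable.mono' h (jf_meas t μ n).aestronglyMeasurable ?_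
  filter_upwards [ae_restrict_mem measurableSet_Ioi] with v hv
  have hv : 0 < v := hv
  rw [Real.norm_of_nonneg (by unfold jf; positivity)]
  unfold jf
  gcongr
  rw [Real.rpow_one]
  have : 0 ≤ μ ^ 2 / v := by positivity
  linarith

lemma jf_int_neg (t μ : ℝ) (ht : 0 < t) (hμ : 0 < μ) :
    IntegrableOn (jf t μ (-3/2)) (Ioi 0) := by
  have h := integrableOn_rpow_mul_exp_neg_mul_rpow (p := 1) (s := (-1/2)) (b := t ^ 2)
    (by norm_num) one_pos (by positivity)
  refine Integrable.mono' (h.const_mul (1 / μ ^ 2)) (jf_meas t μ _).aestronglyMeasurable ?_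
  filter_upwards [ae_restrict_mem measurableSet_Ioi] with v hv
  have hv : 0 < v := hv
  rw [Real.norm_of_nonneg (by unfold jf; positivity)]
  unfold jf
  have e1 : v ^ (-3/2 : ℝ) = v ^ (-1/2 : ℝ) / v := by
    rw [← Real.rpow_sub_one hv.ne']; norm_num
  have e2 : Real.exp (-(v * t ^ 2 + μ ^ 2 / v)) = Real.exp (- t^2 * v ^ (1:ℝ)) * (Real.exp (μ ^ 2 / v))⁻¹ := by
    rw [← Real.exp_neg, ← Real.exp_add, Real.rpow_one]; ring_nf
  have e3 : (Real.exp (μ ^ 2 / v))⁻¹ ≤ v / μ ^ 2 := by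
    rw [inv_le_comm₀ (Real.exp_pos _) (by positivity), inv_div]
    linarith [Real.add_one_le_exp (μ ^ 2 / v)]
  rw [e1, e2]
  calc _ ≤ v ^ (-1/2 : ℝ) / v * (Real.exp (- t^2 * v ^ (1:ℝ)) * (v / μ ^ 2)) := by gcongr
    _ = _ := by field_simp

lemma jf_sum (t μ : ℝ) (ht : 0 < t) (hμ : 0 < μ) :
    t * (∫ v in Ioi 0, jf t μ (-1/2) v) + μ * (∫ v in Ioi 0, jf t μ (-3/2) v)
      = 2 * √Real.pi * Real.exp (-2 * t * μ) := by
  have hd : ∀ v ∈ Ioi (0:ℝ), HasDerivWithinAt (fun v : ℝ => t * v ^ (1/2:ℝ) - μ * v ^ (-1/2:ℝ))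
      (t * (1/2 * v ^ (-1/2:ℝ)) + μ * (1/2 * v ^ (-3/2:ℝ))) (Ioi 0) v := by
    intro v hv
    have hv : 0 < v := hv
    have h1 := (Real.hasDerivAt_rpow_const (x := v) (p := 1/2) (Or.inl hv.ne')).const_mul t
    have h2 := (Real.hasDerivAt_rpow_const (x := v) (p := -1/2) (Or.inl hv.ne')).const_mul μ
    have h3 := (h1.sub h2).hasDerivWithinAt (s := Ioi 0)
    refine h3.congr_deriv ?_
    norm_num
  have hmono : StrictMonoOn (fun v : ℝ => t * v ^ (1/2:ℝ) - μ * v ^ (-1/2:ℝ)) (Ioi 0) := by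
    intro a ha b hb hab
    have ha : 0 < a := ha
    have h1 : a ^ (1/2:ℝ) < b ^ (1/2:ℝ) := Real.rpow_lt_rpow ha.le hab (by norm_num)
    have h2 : b ^ (-1/2:ℝ) < a ^ (-1/2:ℝ) := Real.rpow_lt_rpow_of_neg ha hab (by norm_num)
    have := mul_lt_mul_of_pos_left h1 ht
    have := mul_lt_mul_of_pos_left h2 hμ
    simp only
    linarith
  have him : (fun v : ℝ => t * v ^ (1/2:ℝ) - μ * v ^ (-1/2:ℝ)) '' Ioi 0 = univ := by
    refine eq_univ_of_forall fun y => ?_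
    have hs : y ^ 2 < y ^ 2 + 4 * t * μ := by nlinarith [mul_pos ht hμ]
    set r := √(y ^ 2 + 4 * t * μ) with hr
    have hr2 : r ^ 2 = y ^ 2 + 4 * t * μ := Real.sq_sqrt (by positivity)
    have hry : |y| < r := by
      rw [hr, ← Real.sqrt_sq_eq_abs]; exact Real.sqrt_lt_sqrt (sq_nonneg _) hs
    have hpos : 0 < y + r := by linarith [neg_abs_le y]
    have hu : 0 < (y + r) / (2 * t) := by positivity
    refine ⟨((y + r) / (2 * t)) ^ (2:ℝ), Real.rpow_pos_of_pos hu _, ?_⟩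
    simp only
    rw [← Real.rpow_mul hu.le, ← Real.rpow_mul hu.le]
    norm_num
    rw [Real.rpow_neg_one]
    field_simp
    nlinarith
  have key := integral_image_eq_integral_abs_deriv_smul measurableSet_Ioi hd hmono.injOn
    (fun x => Real.exp (-1 * x ^ 2))
  rw [him, setIntegral_univ, integral_gaussian, div_one] at key
  have e : ∀ v ∈ Ioi (0:ℝ), |t * (1/2 * v ^ (-1/2:ℝ)) + μ * (1/2 * v ^ (-3/2:ℝ))| •
      Real.exp (-1 * (t * v ^ (1/2:ℝ) - μ * v ^ (-1/2:ℝ)) ^ 2)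
      = Real.exp (2 * t * μ) / 2 * (t * jf t μ (-1/2) v + μ * jf t μ (-3/2) v) := by
    intro v hv
    have hv : 0 < v := hv
    rw [abs_of_pos (by positivity)]
    have e1 : v ^ (-1/2:ℝ) = (v ^ (1/2:ℝ))⁻¹ := by rw [← Real.rpow_neg hv.le]; norm_num
    have e2 : v = (v ^ (1/2:ℝ)) ^ 2 := by
      rw [← Real.sqrt_eq_rpow, Real.sq_sqrt hv.le]
    have e3 : Real.exp (-1 * (t * v ^ (1/2:ℝ) - μ * v ^ (-1/2:ℝ)) ^ 2) =
        Real.exp (2 * t * μ) * Real.exp (-(v * t ^ 2 + μ ^ 2 / v)) := by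
      rw [← Real.exp_add]
      congr 1
      rw [e1]
      have hp : 0 < v ^ (1/2:ℝ) := by positivity
      generalize v ^ (1/2:ℝ) = u at *
      rw [e2]
      field_simp
      ring
    rw [e3]
    unfold jf
    simp only [smul_eq_mul]
    ring
  rw [setIntegral_congr_fun measurableSet_Ioi e, integral_const_mul, integral_add
    ((jf_int_of t μ _ ht (by norm_num)).const_mul t) ((jf_int_neg t μ ht hμ).const_mul μ),
    integral_const_mul, integral_const_mul] at key
  have : Real.exp (-2 * t * μ) = (Real.exp (2 * t * μ))⁻¹ := by rw [← Real.exp_neg]; ring_nf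
  rw [this, key]
  field_simp

lemma jf_eq (t μ : ℝ) (ht : 0 < t) (hμ : 0 < μ) :
    t * (∫ v in Ioi 0, jf t μ (-1/2) v) = μ * (∫ v in Ioi 0, jf t μ (-3/2) v) := by
  have h1 := integral_comp_rpow_Ioi (fun v => jf t μ (-1/2) (μ ^ 2 / t ^ 2 * v)) (p := -1) (by norm_num)
  rw [integral_comp_mul_left_Ioi (fun v => jf t μ (-1/2) v) 0 (by positivity), mul_zero] at h1
  have e : ∀ v ∈ Ioi (0:ℝ), (|(-1:ℝ)| * v ^ ((-1:ℝ) - 1)) • jf t μ (-1/2) (μ ^ 2 / t ^ 2 * v ^ (-1:ℝ))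
      = t / μ * jf t μ (-3/2) v := by
    intro v hv
    have hv : 0 < v := hv
    unfold jf
    have e1 : (μ ^ 2 / t ^ 2 * v ^ (-1:ℝ)) ^ (-1/2:ℝ) = t / μ * v ^ (1/2:ℝ) := by
      rw [Real.mul_rpow (by positivity) (by positivity), ← Real.rpow_mul hv.le, ← div_pow,
        ← Real.rpow_natCast, ← Real.rpow_mul (by positivity)]
      norm_num
      rw [Real.rpow_neg_one, inv_div]
      norm_num
    have e2 : v ^ (-3/2 : ℝ) = v ^ ((-1:ℝ) - 1) * v ^ (1/2:ℝ) := by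
      rw [← Real.rpow_add hv]; norm_num
    rw [e1, e2, Real.rpow_neg_one]
    have e3 : (μ ^ 2 / t ^ 2 * v⁻¹ * t ^ 2 + μ ^ 2 / (μ ^ 2 / t ^ 2 * v⁻¹)) =
      v * t ^ 2 + μ ^ 2 / v := by field_simp; ring
    rw [e3]
    norm_num
    ring
  rw [setIntegral_congr_fun measurableSet_Ioi e, integral_const_mul] at h1
  simp only [smul_eq_mul] at h1
  field_simp at h1
  linarith

lemma J1 (t μ : ℝ) (ht : 0 < t) (hμ : 0 < μ) :
    (∫ v in Ioi 0, jf t μ (-1/2) v) = √Real.pi * Real.exp (-2 * t * μ) / t := by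
  have := jf_eq t μ ht hμ
  have := jf_sum t μ ht hμ
  rw [eq_div_iff (by positivity)]
  linarith

lemma J2 (t μ : ℝ) (ht : 0 < t) (hμ : 0 < μ) :
    (∫ v in Ioi 0, jf t μ (-3/2) v) = √Real.pi * Real.exp (-2 * t * μ) / μ := by
  have := jf_eq t μ ht hμ
  have := jf_sum t μ ht hμ
  rw [eq_div_iff (by positivity)]
  linarith

lemma J0 (t μ : ℝ) (ht : 0 < t) (hμ : 0 < μ) :
    t ^ 2 * (∫ v in Ioi 0, jf t μ (1/2) v) =
      √Real.pi * Real.exp (-2 * t * μ) * (1 / (2 * t) + μ) := by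
  have i0 := jf_int_of t μ (1/2) ht (by norm_num)
  have i1 := jf_int_of t μ (-1/2) ht (by norm_num)
  have i2 := jf_int_neg t μ ht hμ
  have i3 : IntegrableOn (fun v => 1/2 * jf t μ (-1/2) v - t ^ 2 * jf t μ (1/2) v) (Ioi 0) :=
    (i1.const_mul _).sub (i0.const_mul _)
  have key := integral_Ioi_of_hasDerivAt_of_tendsto (a := 0) (f := jf t μ (1/2)) (m := 0)
    (f' := fun v => 1/2 * jf t μ (-1/2) v - t ^ 2 * jf t μ (1/2) v + μ ^ 2 * jf t μ (-3/2) v)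
    ?_ ?_ (i3.add (i2.const_mul _)) ?_
  · rw [integral_add i3 (i2.const_mul _),
      integral_sub (i1.const_mul _) (i0.const_mul _), integral_const_mul, integral_const_mul,
      integral_const_mul, J1 t μ ht hμ, J2 t μ ht hμ] at key
    have : jf t μ (1/2) 0 = 0 := by unfold jf; rw [Real.zero_rpow (by norm_num)]; simp
    rw [this] at key
    field_simp at key ⊢
    linarith
  · have hb : Tendsto (fun v : ℝ => v ^ (1/2:ℝ)) (𝓝[≥] 0) (𝓝 0) := by
      have := (Real.continuousAt_rpow_const 0 (1/2) (Or.inr (by norm_num))).tendsto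
      rw [Real.zero_rpow (by norm_num)] at this
      exact this.mono_left nhdsWithin_le_nhds
    have : jf t μ (1/2) 0 = 0 := by unfold jf; rw [Real.zero_rpow (by norm_num)]; simp
    unfold ContinuousWithinAt
    rw [this]
    refine squeeze_zero' ?_ ?_ hb
    · filter_upwards [self_mem_nhdsWithin] with v hv
      have hv : 0 ≤ v := hv
      unfold jf; positivity
    · filter_upwards [self_mem_nhdsWithin] with v hv
      have hv : 0 ≤ v := hv
      unfold jf
      refine mul_le_of_le_one_right (by positivity) ?_
      rw [Real.exp_le_one_iff]
      have : 0 ≤ μ ^ 2 / v := by positivity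
      nlinarith [sq_nonneg t, mul_nonneg hv (sq_nonneg t)]
  · intro v hv
    have hv : 0 < v := hv
    have h1 := (Real.hasDerivAt_rpow_const (x := v) (p := 1/2) (Or.inl hv.ne'))
    have h2 : HasDerivAt (fun v : ℝ => Real.exp (-(v * t ^ 2 + μ ^ 2 / v)))
        (Real.exp (-(v * t ^ 2 + μ ^ 2 / v)) * (-(t ^ 2 - μ ^ 2 / v ^ 2))) v := by
      have h3 := ((hasDerivAt_id v).mul_const (t ^ 2)).add ((hasDerivAt_inv hv.ne').const_mul (μ ^ 2))
      refine (h3.neg.exp).congr_deriv ?_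
      simp only [Pi.add_apply, Pi.neg_apply, id]
      simp [div_eq_mul_inv]
      ring
    refine (h1.mul h2).congr_deriv ?_
    unfold jf
    have e2 : v ^ (-3/2 : ℝ) = v ^ (1/2:ℝ) / v ^ 2 := by
      rw [← Real.rpow_natCast, ← Real.rpow_sub hv]; norm_num
    have e1 : v ^ (-1/2 : ℝ) = v ^ (1/2 - 1:ℝ) := by norm_num
    rw [e2, e1]
    ring
  · have hlim : Tendsto (fun v : ℝ => v ^ (1/2:ℝ) * Real.exp (-(t ^ 2) * v)) atTop (𝓝 0) :=
      tendsto_rpow_mul_exp_neg_mul_atTop_nhds_zero (1/2) (t ^ 2) (by positivity)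
    refine squeeze_zero' ?_ ?_ hlim
    · filter_upwards [eventually_ge_atTop 0] with v hv
      unfold jf; positivity
    · filter_upwards [eventually_ge_atTop 0] with v hv
      unfold jf
      gcongr
      have : 0 ≤ μ ^ 2 / v := by positivity
      linarith


open scoped FourierTransform in
lemma fourier_coord {d : ℕ} (f : Ed d → ℂ) (hf : Integrable f)
    (hf' : Integrable (fun v => ‖v‖ * ‖f v‖)) (i : Fin d) (ξ : Ed d) (D : ℂ)
    (hD : HasDerivAt (fun s : ℝ => 𝓕 f (ξ + s • EuclideanSpace.single i 1)) D 0) :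
    𝓕 (fun x => (x i : ℂ) * f x) ξ = Complex.I / (2 * Real.pi) * D := by
  have h1 := Real.hasFDerivAt_fourier hf hf' ξ
  have h2 : HasDerivAt (fun s : ℝ => ξ + s • (EuclideanSpace.single i (1:ℝ) : Ed d))
      (EuclideanSpace.single i 1) 0 := by
    simpa using ((hasDerivAt_id (0:ℝ)).smul_const (EuclideanSpace.single i (1:ℝ) : Ed d)).const_add ξ
  have h1' : HasFDerivAt (𝓕 f) (𝓕 (VectorFourier.fourierSMulRight (innerSL ℝ) f) ξ)
      (ξ + (0:ℝ) • (EuclideanSpace.single i (1:ℝ) : Ed d)) := by simpa using h1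
  have h3 := h1'.comp_hasDerivAt 0 h2
  have h4 := hD.unique h3
  rw [h4]
  have hfint : Integrable (VectorFourier.fourierSMulRight (innerSL ℝ) f) := by
    refine (hf'.const_mul (2 * Real.pi * ‖(innerSL ℝ : Ed d →L[ℝ] Ed d →L[ℝ] ℝ)‖)).mono'
      hf.aestronglyMeasurable.fourierSMulRight (Eventually.of_forall fun x => ?_)
    refine (VectorFourier.norm_fourierSMulRight_le _ _ _).trans (le_of_eq (by ring))
  have h5 : (𝓕 (VectorFourier.fourierSMulRight (innerSL ℝ) f) ξ) (EuclideanSpace.single i 1)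
      = 𝓕 (fun x => VectorFourier.fourierSMulRight (innerSL ℝ) f x (EuclideanSpace.single i 1)) ξ := by
    rw [Real.fourier_eq, Real.fourier_eq, ContinuousLinearMap.integral_apply]
    · rfl
    · exact (Real.fourierIntegral_convergent_iff ξ).2 hfint
  rw [h5, Real.fourier_eq, Real.fourier_eq, ← integral_const_mul]
  congr 1
  ext x
  simp only [VectorFourier.fourierSMulRight_apply, Circle.smul_def, smul_eq_mul]
  have : (Real.pi:ℂ) ≠ 0 := by exact_mod_cast Real.pi_ne_zero
  have h6 : (innerSL ℝ x) (EuclideanSpace.single i (1:ℝ)) = x i := by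
    rw [innerSL_apply_apply, EuclideanSpace.inner_single_right]; simp
  rw [h6, Complex.real_smul]
  field_simp
  ring_nf
  simp
  try ring

lemma gauss_int (d : ℕ) (v : ℝ) (hv : 0 < v) :
    Integrable (fun x : Ed d => Real.exp (-v * ‖x‖ ^ 2)) := by
  have h := (GaussianFourier.integrable_cexp_neg_mul_sq_norm_add (V := Ed d) (b := (v:ℂ))
    (by simpa using hv) 0 0).norm
  refine h.congr (Eventually.of_forall fun x => ?_)
  simp only [Complex.norm_exp]
  congr 1
  simp
  left
  norm_cast

lemma gauss_int2 (d : ℕ) (v : ℝ) (hv : 0 < v) :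
    Integrable (fun x : Ed d => (1 + ‖x‖ ^ 2) * Real.exp (-v * ‖x‖ ^ 2)) := by
  refine ((gauss_int d (v/2) (by positivity)).const_mul (1 + 2 / v)).mono'
    (by apply Continuous.aestronglyMeasurable; fun_prop) (Eventually.of_forall fun x => ?_)
  rw [Real.norm_of_nonneg (by positivity)]
  have e : Real.exp (-v * ‖x‖ ^ 2) = Real.exp (-(v/2) * ‖x‖ ^ 2) * (Real.exp (v/2 * ‖x‖ ^ 2))⁻¹ := by
    rw [← Real.exp_neg, ← Real.exp_add]; ring_nf
  have h1 : 1 + ‖x‖ ^ 2 ≤ (1 + 2 / v) * Real.exp (v/2 * ‖x‖ ^ 2) := by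
    have h2 := Real.add_one_le_exp (v/2 * ‖x‖ ^ 2)
    have h3 : 0 ≤ 2 / v := by positivity
    have h4 : 0 ≤ v/2 * ‖x‖ ^ 2 := by positivity
    calc 1 + ‖x‖ ^ 2 = 1 + (2 / v) * (v/2 * ‖x‖ ^ 2) := by field_simp
      _ ≤ (1 + 2 / v) * (v/2 * ‖x‖ ^ 2 + 1) := by nlinarith
      _ ≤ _ := by gcongr
  rw [e]
  calc _ ≤ ((1 + 2 / v) * Real.exp (v/2 * ‖x‖ ^ 2)) * (Real.exp (-(v/2) * ‖x‖ ^ 2) * (Real.exp (v/2 * ‖x‖ ^ 2))⁻¹) := by gcongr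
    _ = _ := by field_simp

def gs (d : ℕ) (v : ℝ) (x : Ed d) : ℂ := Complex.exp (-(v:ℂ) * ‖x‖ ^ 2)

lemma gs_norm (d : ℕ) (v : ℝ) (x : Ed d) : ‖gs d v x‖ = Real.exp (-v * ‖x‖ ^ 2) := by
  unfold gs
  rw [Complex.norm_exp]
  norm_cast

lemma gs_cont (d : ℕ) (v : ℝ) : Continuous (gs d v) := by unfold gs; fun_prop

/-- integrability of a polynomially bounded function times the Gaussian -/
lemma gs_poly_int (d : ℕ) (v : ℝ) (hv : 0 < v) (q : Ed d → ℂ) (hq : Continuous q)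
    (hb : ∀ x, ‖q x‖ ≤ 1 + ‖x‖ ^ 2) : Integrable (fun x => q x * gs d v x) := by
  refine (gauss_int2 d v hv).mono' (hq.mul (gs_cont d v)).aestronglyMeasurable
    (Eventually.of_forall fun x => ?_)
  rw [norm_mul, gs_norm]
  gcongr
  exact hb x

def gh (d : ℕ) (v : ℝ) (ξ : Ed d) : ℂ :=
  (Real.pi / v : ℂ) ^ (d / 2 : ℂ) * Complex.exp (-Real.pi ^ 2 * ‖ξ‖ ^ 2 / v)

lemma coord_le {d : ℕ} (x : Ed d) (i : Fin d) : |x i| ≤ ‖x‖ := by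
  simpa using PiLp.norm_apply_le x i

open scoped FourierTransform in
lemma F0 (d : ℕ) (v : ℝ) (hv : 0 < v) (ξ : Ed d) : 𝓕 (gs d v) ξ = gh d v ξ := by
  have := fourier_gaussian_innerProductSpace (V := Ed d) (b := (v:ℂ)) (by simpa using hv) ξ
  unfold gs gh
  simpa using this

lemma gh_deriv (d : ℕ) (v : ℝ) (ξ : Ed d) (i : Fin d) :
    HasDerivAt (fun s : ℝ => gh d v (ξ + s • EuclideanSpace.single i 1))
      (-2 * Real.pi ^ 2 * ξ i / v * gh d v ξ) 0 := by
  have hn : ∀ s : ℝ, ‖ξ + s • (EuclideanSpace.single i (1:ℝ) : Ed d)‖ ^ 2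
      = ‖ξ‖ ^ 2 + 2 * (s * ξ i) + s ^ 2 := by
    intro s
    rw [norm_add_sq_real, inner_smul_right, EuclideanSpace.inner_single_right, norm_smul]
    simp
  have h1 : ∀ s : ℝ, gh d v (ξ + s • EuclideanSpace.single i 1) =
      (Real.pi / v : ℂ) ^ (d / 2 : ℂ) *
        Complex.exp (-Real.pi ^ 2 * (((‖ξ‖ ^ 2 + 2 * (s * ξ i) + s ^ 2 : ℝ)) : ℂ) / v) := by
    intro s
    unfold gh
    rw [← hn s]
    push_cast
    rfl
  have h2 : HasDerivAt (fun s : ℝ => ‖ξ‖ ^ 2 + 2 * (s * ξ i) + s ^ 2) (2 * ξ i) 0 := by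
    have := ((((hasDerivAt_id (0:ℝ)).mul_const (ξ i)).const_mul 2).const_add (‖ξ‖ ^ 2)).add
      ((hasDerivAt_id (0:ℝ)).pow 2)
    exact this.congr_deriv (by simp)
  have h3 := ((((h2.ofReal_comp.const_mul (-Real.pi ^ 2 : ℂ)).div_const (v:ℂ)).cexp).const_mul
    ((Real.pi / v : ℂ) ^ (d / 2 : ℂ)))
  simp_rw [h1]
  refine h3.congr_deriv ?_
  unfold gh
  push_cast
  simp
  ring

open scoped FourierTransform in
lemma F1 (d : ℕ) (v : ℝ) (hv : 0 < v) (i : Fin d) (ξ : Ed d) :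
    𝓕 (fun x => (x i : ℂ) * gs d v x) ξ = -Complex.I * Real.pi * ξ i / v * gh d v ξ := by
  have i0 : Integrable (gs d v) := by
    simpa using gs_poly_int d v hv (fun _ => 1) continuous_const (fun x => by simp)
  have i1 : Integrable (fun x : Ed d => ‖x‖ * ‖gs d v x‖) := by
    simpa using (gs_poly_int d v hv (fun x => ((‖x‖:ℝ):ℂ)) (by fun_prop) (fun x => by
      simp; nlinarith [sq_nonneg (‖x‖ - 1)])).norm
  have hD := gh_deriv d v ξ i
  simp_rw [← F0 d v hv] at hD
  rw [fourier_coord _ i0 i1 i ξ _ hD, F0 d v hv]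
  have : (Real.pi:ℂ) ≠ 0 := by exact_mod_cast Real.pi_ne_zero
  field_simp

open scoped FourierTransform in
lemma F2 (d : ℕ) (v : ℝ) (hv : 0 < v) (i k : Fin d) (ξ : Ed d) :
    𝓕 (fun x => (x i : ℂ) * (x k : ℂ) * gs d v x) ξ =
      ((if i = k then 1 else 0) / (2 * v) - Real.pi ^ 2 * ξ i * ξ k / v ^ 2) * gh d v ξ := by
  have i0 : Integrable (fun x : Ed d => (x k : ℂ) * gs d v x) :=
    gs_poly_int d v hv (fun x => (x k : ℂ)) (by fun_prop) (fun x => by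
      have := coord_le x k
      simp; nlinarith [sq_nonneg (‖x‖ - 1)])
  have i1 : Integrable (fun x : Ed d => ‖x‖ * ‖(x k : ℂ) * gs d v x‖) := by
    have := (gs_poly_int d v hv (fun x => ((‖x‖ * x k :ℝ):ℂ)) (by fun_prop) (fun x => by
      have := coord_le x k
      rw [Complex.norm_real, norm_mul, norm_norm, Real.norm_eq_abs]
      nlinarith [norm_nonneg x])).norm
    refine this.congr (Eventually.of_forall fun x => ?_)
    simp [mul_assoc]
  have hc : HasDerivAt (fun s : ℝ => -Complex.I * Real.pi *
      (((ξ + s • (EuclideanSpace.single i (1:ℝ) : Ed d)) k : ℝ) : ℂ) / v)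
      (-Complex.I * Real.pi * (if i = k then 1 else 0) / v) 0 := by
    have h1 : HasDerivAt (fun s : ℝ => (ξ + s • (EuclideanSpace.single i (1:ℝ) : Ed d)) k)
        (if i = k then 1 else 0) 0 := by
      have := (((hasDerivAt_id (0:ℝ)).mul_const (if i = k then (1:ℝ) else 0)).const_add (ξ k))
      simp only [one_mul] at this
      refine this.congr_of_eventuallyEq (Eventually.of_forall fun s => ?_)
      by_cases h : i = k
      · subst h; simp
      · simp [h, Ne.symm h]
    have := (h1.ofReal_comp.const_mul (-Complex.I * Real.pi)).div_const (v:ℂ)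
    refine this.congr_deriv ?_
    split_ifs <;> simp
  have hD := hc.mul (gh_deriv d v ξ i)
  have e : (fun s : ℝ => 𝓕 (fun x : Ed d => (x k : ℂ) * gs d v x) (ξ + s • EuclideanSpace.single i 1))
    = (fun s : ℝ => -Complex.I * Real.pi *
      (((ξ + s • (EuclideanSpace.single i (1:ℝ) : Ed d)) k : ℝ) : ℂ) / v) *
      (fun s : ℝ => gh d v (ξ + s • EuclideanSpace.single i 1)) := by
    ext s
    rw [F1 d v hv]
    rfl
  rw [← e] at hD
  simp_rw [mul_assoc]
  rw [fourier_coord _ i0 i1 i ξ _ hD]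
  have hpi : (Real.pi:ℂ) ≠ 0 := by exact_mod_cast Real.pi_ne_zero
  have hv' : (v:ℂ) ≠ 0 := by exact_mod_cast hv.ne'
  simp only [zero_smul, add_zero]
  field_simp
  ring_nf
  simp only [Complex.I_sq]
  try ring


lemma snoc_last (d : ℕ) (x : Ed d) (t : ℝ) : snocVec d x t (Fin.last d) = t := by
  simp [snocVec]

lemma snoc_cast (d : ℕ) (x : Ed d) (t : ℝ) (i : Fin d) : snocVec d x t i.castSucc = x i := by
  simp [snocVec]

lemma snoc_cont (d : ℕ) (t : ℝ) (j : Fin (d+1)) : Continuous (fun x : Ed d => snocVec d x t j) := by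
  induction j using Fin.lastCases with
  | last => simp only [snoc_last]; fun_prop
  | cast i => simp only [snoc_cast]; fun_prop

lemma snoc_sq_le (d : ℕ) (x : Ed d) (t : ℝ) (j : Fin (d+1)) :
    snocVec d x t j ^ 2 ≤ ‖x‖ ^ 2 + t ^ 2 := by
  induction j using Fin.lastCases with
  | last => simp only [snoc_last]; nlinarith [norm_nonneg x]
  | cast i =>
    simp only [snoc_cast]
    have := coord_le x i
    have h := sq_le_sq' (by linarith [neg_abs_le (x i)]) ((le_abs_self _).trans this)
    nlinarith

lemma snoc_mul_le (d : ℕ) (x : Ed d) (t : ℝ) (j k : Fin (d+1)) :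
    |snocVec d x t j * snocVec d x t k| ≤ ‖x‖ ^ 2 + t ^ 2 := by
  have h1 := snoc_sq_le d x t j
  have h2 := snoc_sq_le d x t k
  rw [abs_le]
  constructor <;> nlinarith [sq_nonneg (snocVec d x t j - snocVec d x t k),
    sq_nonneg (snocVec d x t j + snocVec d x t k)]

def Mm (d : ℕ) (t v : ℝ) (ξ : Ed d) (j k : Fin (d+1)) : ℂ :=
  Fin.lastCases (motive := fun _ => ℂ)
    (Fin.lastCases (motive := fun _ => ℂ) ((t:ℂ) ^ 2)
      (fun k => -Complex.I * Real.pi * t * ξ k / v) k)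
    (fun j => Fin.lastCases (motive := fun _ => ℂ) (-Complex.I * Real.pi * t * ξ j / v)
      (fun k => (if j = k then 1 else 0) / (2 * v) - Real.pi ^ 2 * ξ j * ξ k / v ^ 2) k) j

open scoped FourierTransform in
lemma FM (d : ℕ) (t v : ℝ) (hv : 0 < v) (j k : Fin (d+1)) (ξ : Ed d) :
    𝓕 (fun x => (snocVec d x t j : ℂ) * (snocVec d x t k : ℂ) * gs d v x) ξ =
      Mm d t v ξ j k * gh d v ξ := by
  have hs : ∀ (c : ℂ) (f : Ed d → ℂ), 𝓕 (fun x => c * f x) ξ = c * 𝓕 f ξ := by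
    intro c f
    rw [Real.fourier_eq', Real.fourier_eq', ← integral_const_mul]
    congr 1
    ext x
    simp only [smul_eq_mul]
    ring
  induction j using Fin.lastCases with
  | last =>
    induction k using Fin.lastCases with
    | last =>
      simp only [snoc_last, Mm, Fin.lastCases_last]
      rw [hs, F0 d v hv]; ring
    | cast k =>
      simp only [snoc_last, snoc_cast, Mm, Fin.lastCases_last, Fin.lastCases_castSucc, mul_assoc]
      rw [hs, F1 d v hv]; ring
  | cast j =>
    induction k using Fin.lastCases with
    | last =>
      simp only [snoc_last, snoc_cast, Mm, Fin.lastCases_last, Fin.lastCases_castSucc]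
      simp_rw [mul_comm _ (t:ℂ), mul_assoc]
      rw [hs, F1 d v hv]; ring
    | cast k =>
      simp only [snoc_cast, Mm, Fin.lastCases_castSucc]
      rw [F2 d v hv]

def wv (d : ℕ) (ξ : Ed d) (j : Fin (d+1)) : ℂ :=
  Fin.lastCases (motive := fun _ => ℂ) ((Real.pi * ‖ξ‖ : ℝ) : ℂ)
    (fun j => -Complex.I * Real.pi * ξ j) j

def Ee (d : ℕ) (t : ℝ) (j k : Fin (d+1)) (ξ : Ed d) : ℂ :=
  (Real.exp (-2 * t * (Real.pi * ‖ξ‖)) : ℂ) *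
    ((if j = k then 1 else 0) + 2 * t / ((Real.pi * ‖ξ‖ : ℝ) : ℂ) * (wv d ξ j * wv d ξ k))

lemma MJ (d : ℕ) (t : ℝ) (ht : 0 < t) (j k : Fin (d+1)) (ξ : Ed d) (hξ : ξ ≠ 0) :
    ∫ v in Ioi (0:ℝ), Mm d t v ξ j k * (jf t (Real.pi * ‖ξ‖) (1/2) v : ℂ) =
      (√Real.pi / (2 * t) : ℂ) * Ee d t j k ξ := by
  have hμ : 0 < Real.pi * ‖ξ‖ := mul_pos Real.pi_pos (norm_pos_iff.2 hξ)
  unfold Ee wv Mm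
  have hμd : ((Real.pi * ‖ξ‖ : ℝ) : ℂ) ≠ 0 := by exact_mod_cast hμ.ne'
  have htc : (t:ℂ) ≠ 0 := by exact_mod_cast ht.ne'
  generalize Real.pi * ‖ξ‖ = μ at *
  have i1 : Integrable (fun v => ((jf t μ (-1/2) v : ℝ) : ℂ)) (volume.restrict (Ioi 0)) :=
    (jf_int_of t μ (-1/2) ht (by norm_num)).ofReal (𝕜 := ℂ)
  have i2 : Integrable (fun v => ((jf t μ (-3/2) v : ℝ) : ℂ)) (volume.restrict (Ioi 0)) :=
    (jf_int_neg t μ ht hμ).ofReal (𝕜 := ℂ)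
  have j1 := congrArg (fun r : ℝ => (r : ℂ)) (J1 t μ ht hμ)
  have j2 := congrArg (fun r : ℝ => (r : ℂ)) (J2 t μ ht hμ)
  have j0 := congrArg (fun r : ℝ => (r : ℂ)) (J0 t μ ht hμ)
  simp only [Complex.ofReal_mul, Complex.ofReal_div, ← integral_complex_ofReal] at j0 j1 j2
  have e1 : ∀ v ∈ Ioi (0:ℝ), ((jf t μ (1/2) v : ℝ) : ℂ) / v = (jf t μ (-1/2) v : ℝ) := by
    intro v hv
    have hv : 0 < v := hv
    rw [← Complex.ofReal_div]
    congr 1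
    unfold jf
    rw [mul_div_right_comm, ← Real.rpow_sub_one hv.ne']
    norm_num
  have e2 : ∀ v ∈ Ioi (0:ℝ), ((jf t μ (1/2) v : ℝ) : ℂ) / v ^ 2 = (jf t μ (-3/2) v : ℝ) := by
    intro v hv
    have hv' : 0 < v := hv
    rw [pow_two, ← div_div, e1 v hv, ← Complex.ofReal_div]
    congr 1
    unfold jf
    rw [mul_div_right_comm, ← Real.rpow_sub_one hv'.ne']
    norm_num
  have e3 : ∀ (c : ℂ), ∫ v in Ioi (0:ℝ), c / v * (jf t μ (1/2) v : ℂ) =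
      c * (√Real.pi * (Real.exp (-2 * t * μ) : ℂ) / t) := by
    intro c
    rw [← j1, ← integral_const_mul]
    refine setIntegral_congr_fun measurableSet_Ioi fun v hv => ?_
    rw [← e1 v hv]; ring
  induction j using Fin.lastCases with
  | last =>
    induction k using Fin.lastCases with
    | last =>
      simp only [Fin.lastCases_last]
      rw [integral_const_mul]
      rw [← Complex.ofReal_pow, j0]
      push_cast
      simp
      field_simp
    | cast k =>
      simp only [Fin.lastCases_last, Fin.lastCases_castSucc]
      rw [e3, if_neg (Fin.castSucc_lt_last k).ne']
      field_simp
      ring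
  | cast j =>
    induction k using Fin.lastCases with
    | last =>
      simp only [Fin.lastCases_last, Fin.lastCases_castSucc]
      rw [e3, if_neg (Fin.castSucc_lt_last j).ne]
      field_simp
      ring
    | cast k =>
      simp only [Fin.lastCases_castSucc]
      have : ∀ v ∈ Ioi (0:ℝ), ((if j = k then 1 else 0) / (2 * (v:ℂ)) - Real.pi ^ 2 * ξ j * ξ k / v ^ 2)
          * ((jf t μ (1/2) v : ℝ) : ℂ) = (if j = k then 1 else 0) / 2 * ((jf t μ (-1/2) v : ℝ) : ℂ)
            - Real.pi ^ 2 * ξ j * ξ k * ((jf t μ (-3/2) v : ℝ) : ℂ) := by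
        intro v hv
        rw [← e1 v hv, ← e2 v hv]
        have hv' : (v:ℂ) ≠ 0 := by exact_mod_cast (ne_of_gt hv)
        field_simp
      rw [setIntegral_congr_fun measurableSet_Ioi this, integral_sub (i1.const_mul _) (i2.const_mul _),
        integral_const_mul, integral_const_mul]
      have hI := Complex.I_sq
      erw [j1, j2]
      simp only [Fin.castSucc_inj]
      field_simp
      linear_combination (-2 * t * Real.pi ^ 2 * ξ j * ξ k : ℂ) * hI

lemma wv_sum (d : ℕ) (ξ : Ed d) : ∑ l, wv d ξ l * wv d ξ l = 0 := by
  rw [Fin.sum_univ_castSucc]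
  simp only [wv, Fin.lastCases_last, Fin.lastCases_castSucc]
  have h : ((‖ξ‖ ^ 2 : ℝ) : ℂ) = ∑ i, ((ξ i : ℝ) : ℂ) ^ 2 := by
    rw [EuclideanSpace.real_norm_sq_eq]; push_cast; rfl
  have : ∀ i, -Complex.I * Real.pi * (ξ i : ℂ) * (-Complex.I * Real.pi * ξ i)
      = -(Real.pi : ℂ) ^ 2 * (ξ i : ℂ) ^ 2 := by
    intro i
    linear_combination (Real.pi : ℂ) ^ 2 * (ξ i : ℂ) ^ 2 * Complex.I_sq
  simp_rw [this]
  rw [← Finset.mul_sum, ← h]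
  push_cast
  ring

lemma Ee_semigroup (d : ℕ) (t₁ t₂ : ℝ) (j k : Fin (d+1)) (ξ : Ed d) :
    ∑ l, Ee d t₁ j l ξ * Ee d t₂ l k ξ = Ee d (t₁ + t₂) j k ξ := by
  unfold Ee
  have hw := wv_sum d ξ
  generalize ((Real.pi * ‖ξ‖ : ℝ) : ℂ) = m
  have he : (Real.exp (-2 * (t₁ + t₂) * (Real.pi * ‖ξ‖)) : ℂ) =
    (Real.exp (-2 * t₁ * (Real.pi * ‖ξ‖)) : ℂ) * (Real.exp (-2 * t₂ * (Real.pi * ‖ξ‖)) : ℂ) := by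
    rw [← Complex.ofReal_mul, ← Real.exp_add]; ring_nf
  rw [he]
  have : ∀ a b : ℂ, ∀ l, a * ((if j = l then 1 else 0) + 2 * t₁ / m * (wv d ξ j * wv d ξ l)) *
      (b * ((if l = k then 1 else 0) + 2 * t₂ / m * (wv d ξ l * wv d ξ k))) =
      a * b * ((if j = l then 1 else 0) * (if l = k then 1 else 0)
        + (if j = l then 1 else 0) * (2 * t₂ / m * (wv d ξ l * wv d ξ k))
        + (if l = k then 1 else 0) * (2 * t₁ / m * (wv d ξ j * wv d ξ l))
        + 2 * t₁ / m * (2 * t₂ / m) * wv d ξ j * wv d ξ k * (wv d ξ l * wv d ξ l)) := by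
    intro a b l; ring
  simp_rw [this]
  rw [← Finset.mul_sum, Finset.sum_add_distrib, Finset.sum_add_distrib, Finset.sum_add_distrib,
    ← Finset.mul_sum Finset.univ (fun l => wv d ξ l * wv d ξ l), hw]
  simp
  ring_nf


lemma sphereVol_pos (d : ℕ) : 0 < sphereVol d := by
  unfold sphereVol
  have : 0 < (volume (Metric.ball (0 : EuclideanSpace ℝ (Fin (d+1))) 1)).toReal :=
    ENNReal.toReal_pos (Metric.measure_ball_pos _ _ one_pos).ne' measure_ball_lt_top.ne
  positivity

lemma const_eq (d : ℕ) : 2 * ((d:ℝ) + 1) / sphereVol d =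
    2 / √Real.pi ^ (d+1) * Real.Gamma (((d:ℝ) + 3) / 2) := by
  unfold sphereVol
  rw [EuclideanSpace.volume_ball]
  have hg : 0 < Real.Gamma (((d:ℝ) + 3) / 2) := Real.Gamma_pos_of_pos (by positivity)
  have hp : 0 < √Real.pi := Real.sqrt_pos.2 Real.pi_pos
  have : (((Fintype.card (Fin (d+1)) : ℕ) : ℝ) / 2 + 1) = ((d:ℝ) + 3) / 2 := by
    simp; ring
  rw [this]
  simp only [ENNReal.ofReal_one, one_pow, one_mul, Fintype.card_fin]
  rw [ENNReal.toReal_ofReal (by positivity)]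
  field_simp

def kf (d : ℕ) (t : ℝ) (j k : Fin (d+1)) (x : Ed d) (v : ℝ) : ℝ :=
  2 / √Real.pi ^ (d+1) * t * (snocVec d x t j * snocVec d x t k) *
    (v ^ (((d:ℝ)+1)/2) * Real.exp (-((‖x‖^2 + t^2) * v)))

lemma gam (d : ℕ) (A : ℝ) (hA : 0 < A) :
    ∫ v in Ioi (0:ℝ), v ^ (((d:ℝ)+1)/2) * Real.exp (-(A * v)) =
      Real.Gamma (((d:ℝ) + 3) / 2) / A ^ (((d:ℝ) + 3) / 2) := by
  have := Real.integral_rpow_mul_exp_neg_mul_Ioi (a := ((d:ℝ)+3)/2) (r := A) (by positivity) hA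
  rw [show ((d:ℝ)+3)/2 - 1 = ((d:ℝ)+1)/2 by ring] at this
  rw [this, one_div, Real.inv_rpow hA.le]
  ring

lemma gam_int (d : ℕ) (A : ℝ) (hA : 0 < A) :
    IntegrableOn (fun v : ℝ => v ^ (((d:ℝ)+1)/2) * Real.exp (-(A * v))) (Ioi 0) := by
  have := integrableOn_rpow_mul_exp_neg_mul_rpow (p := 1) (s := ((d:ℝ)+1)/2) (b := A)
    (by have : (0:ℝ) ≤ d := by positivity
        linarith) one_pos hA
  refine this.congr_fun (fun v hv => ?_) measurableSet_Ioi
  simp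

lemma pE_rep (d : ℕ) (t : ℝ) (ht : 0 < t) (j k : Fin (d+1)) (x : Ed d) :
    pEntry d t j k x = ∫ v in Ioi (0:ℝ), kf d t j k x v := by
  unfold kf pEntry
  rw [integral_const_mul, gam d _ (by positivity), const_eq]
  ring

lemma kf_abs (d : ℕ) (t : ℝ) (ht : 0 < t) (j k : Fin (d+1)) (x : Ed d) :
    ∫ v in Ioi (0:ℝ), |kf d t j k x v| = |pEntry d t j k x| := by
  have h1 : ∀ v ∈ Ioi (0:ℝ), |kf d t j k x v| =
    |2 / √Real.pi ^ (d+1) * t * (snocVec d x t j * snocVec d x t k)| *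
    (v ^ (((d:ℝ)+1)/2) * Real.exp (-((‖x‖^2 + t^2) * v))) := by
    intro v hv
    have hv : 0 < v := hv
    unfold kf
    rw [abs_mul, abs_of_pos (a := v ^ (((d:ℝ)+1)/2) * _) (by positivity)]
  rw [setIntegral_congr_fun measurableSet_Ioi h1, pE_rep d t ht]
  unfold kf
  have hg : 0 < Real.Gamma (((d:ℝ) + 3) / 2) := Real.Gamma_pos_of_pos (by positivity)
  rw [integral_const_mul, integral_const_mul, gam d _ (by positivity)]
  rw [abs_mul _ (Real.Gamma (((d:ℝ) + 3) / 2) / _), abs_of_nonneg (a := Real.Gamma (((d:ℝ) + 3) / 2) / _)]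
  positivity

lemma pE_cont (d : ℕ) (t : ℝ) (ht : 0 < t) (j k : Fin (d+1)) : Continuous (pEntry d t j k) := by
  unfold pEntry
  have h1 := snoc_cont d t j
  have h2 := snoc_cont d t k
  refine Continuous.div (by fun_prop) ?_ (fun x => by positivity)
  refine Continuous.rpow_const (by fun_prop) (fun x => Or.inl (by positivity))

lemma pE_le (d : ℕ) (t : ℝ) (ht : 0 < t) (j k : Fin (d+1)) (x : Ed d) :
    |pEntry d t j k x| ≤ (2 * ((d : ℝ) + 1) / sphereVol d) * t *
      (‖x‖ ^ 2 + t ^ 2) ^ (-(((d : ℝ) + 1) / 2)) := by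
  have hs := sphereVol_pos d
  have hA : 0 < ‖x‖ ^ 2 + t ^ 2 := by positivity
  have e : pEntry d t j k x = (2 * ((d : ℝ) + 1) / sphereVol d) * t *
    ((snocVec d x t j * snocVec d x t k) * (‖x‖ ^ 2 + t ^ 2) ^ (-(((d : ℝ) + 3) / 2))) := by
    unfold pEntry
    rw [Real.rpow_neg hA.le]
    ring
  rw [e, abs_mul, abs_of_pos (a := (2 * ((d : ℝ) + 1) / sphereVol d) * t) (by positivity), abs_mul,
    abs_of_pos (a := (‖x‖ ^ 2 + t ^ 2) ^ (-(((d : ℝ) + 3) / 2))) (by positivity)]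
  refine mul_le_mul_of_nonneg_left ?_ (by positivity)
  refine (mul_le_mul_of_nonneg_right (snoc_mul_le d x t j k) (by positivity)).trans ?_
  have : -(((d : ℝ) + 1) / 2) = 1 + -(((d : ℝ) + 3) / 2) := by ring
  rw [this, Real.rpow_add hA, Real.rpow_one]

lemma pE_bdd (d : ℕ) (t : ℝ) (ht : 0 < t) (j k : Fin (d+1)) :
    ∃ C, ∀ x : Ed d, |pEntry d t j k x| ≤ C := by
  have hs := sphereVol_pos d
  refine ⟨(2 * ((d : ℝ) + 1) / sphereVol d) * t * (t ^ 2) ^ (-(((d : ℝ) + 1) / 2)), fun x => ?_⟩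
  refine (pE_le d t ht j k x).trans ?_
  refine mul_le_mul_of_nonneg_left ?_ (by positivity)
  refine Real.rpow_le_rpow_of_nonpos (by positivity) (by nlinarith [norm_nonneg x]) ?_
  have : 0 < ((d:ℝ)+1)/2 := by positivity
  linarith

lemma pE_int (d : ℕ) (t : ℝ) (ht : 0 < t) (j k : Fin (d+1)) : Integrable (pEntry d t j k) := by
  have hs := sphereVol_pos d
  have hb : Integrable (fun x : Ed d => (1 + ‖x‖^2) ^ (-((d:ℝ)+1)/2)) :=
    integrable_rpow_neg_one_add_norm_sq (by simp)
  set m := min 1 (t^2) with hm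
  have hmp : 0 < m := lt_min one_pos (by positivity)
  refine (hb.const_mul ((2 * ((d : ℝ) + 1) / sphereVol d) * t * m ^ (-((d:ℝ)+1)/2))).mono'
    (pE_cont d t ht j k).aestronglyMeasurable (ae_of_all _ fun x => ?_)
  rw [Real.norm_eq_abs]
  refine (pE_le d t ht j k x).trans ?_
  rw [mul_assoc (_ * t), ← Real.mul_rpow hmp.le (by positivity)]
  refine mul_le_mul_of_nonneg_left ?_ (by positivity)
  rw [neg_div']
  refine Real.rpow_le_rpow_of_nonpos (by positivity) ?_ ?_
  · have h1 : m ≤ 1 := min_le_left _ _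
    have h2 : m ≤ t^2 := min_le_right _ _
    nlinarith [sq_nonneg ‖x‖]
  · have : 0 < ((d:ℝ)+1)/2 := by positivity
    linarith

lemma gh_real (d : ℕ) (v : ℝ) (hv : 0 < v) (t : ℝ) (ξ : Ed d) :
    ((v ^ (((d:ℝ)+1)/2) * Real.exp (-(t^2 * v)) : ℝ) : ℂ) * gh d v ξ =
      ((√Real.pi ^ d : ℝ) : ℂ) * (jf t (Real.pi * ‖ξ‖) (1/2) v : ℂ) := by
  have hg : gh d v ξ = (((Real.pi / v) ^ ((d:ℝ)/2) * Real.exp (-Real.pi^2 * ‖ξ‖^2 / v) : ℝ) : ℂ) := by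
    unfold gh
    rw [Complex.ofReal_mul, Complex.ofReal_cpow (by positivity)]
    push_cast
    rfl
  rw [hg, ← Complex.ofReal_mul, ← Complex.ofReal_mul]
  congr 1
  unfold jf
  have h1 : √Real.pi ^ d = Real.pi ^ ((d:ℝ)/2) := by
    rw [Real.sqrt_eq_rpow, ← Real.rpow_natCast, ← Real.rpow_mul Real.pi_pos.le]
    congr 1; ring
  rw [h1, Real.div_rpow Real.pi_pos.le hv.le]
  have h2 : v ^ (((d:ℝ)+1)/2) = v ^ ((d:ℝ)/2) * v ^ ((1:ℝ)/2) := by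
    rw [← Real.rpow_add hv]; congr 1; ring
  have h3 : Real.exp (-(v * t^2 + (Real.pi * ‖ξ‖)^2 / v)) =
      Real.exp (-(t^2 * v)) * Real.exp (-Real.pi^2 * ‖ξ‖^2 / v) := by
    rw [← Real.exp_add]; congr 1; ring
  rw [h2, h3]
  have : v ^ ((d:ℝ)/2) ≠ 0 := by positivity
  field_simp


lemma kf_meas (d : ℕ) (t : ℝ) (j k : Fin (d+1)) :
    Measurable (fun p : Ed d × ℝ => kf d t j k p.1 p.2) := by
  unfold kf
  have h1 := (snoc_cont d t j).measurable
  have h2 := (snoc_cont d t k).measurable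
  fun_prop

def ph (d : ℕ) (ξ x : Ed d) : ℂ := Complex.exp (((-2 * Real.pi * inner ℝ x ξ : ℝ) : ℂ) * Complex.I)

lemma ph_norm (d : ℕ) (ξ x : Ed d) : ‖ph d ξ x‖ = 1 := Complex.norm_exp_ofReal_mul_I _

lemma ph_cont (d : ℕ) (ξ : Ed d) : Continuous (ph d ξ) := by
  unfold ph
  fun_prop

lemma kf_prod_int (d : ℕ) (t : ℝ) (ht : 0 < t) (j k : Fin (d+1)) (ξ : Ed d) :
    Integrable (Function.uncurry fun (x : Ed d) (v : ℝ) => ph d ξ x * (kf d t j k x v : ℂ))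
      ((volume : Measure (Ed d)).prod (volume.restrict (Ioi 0))) := by
  have hm : Measurable (Function.uncurry fun (x : Ed d) (v : ℝ) => ph d ξ x * (kf d t j k x v : ℂ)) := by
    have h1 := (ph_cont d ξ).measurable
    have h2 := kf_meas d t j k
    unfold Function.uncurry
    fun_prop
  rw [integrable_prod_iff hm.aestronglyMeasurable]
  have hn : ∀ x v, ‖Function.uncurry (fun (x : Ed d) (v : ℝ) => ph d ξ x * (kf d t j k x v : ℂ)) (x, v)‖
      = |kf d t j k x v| := by
    intro x v
    simp [Function.uncurry, ph_norm]
  constructor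
  · refine ae_of_all _ fun x => ?_
    have h := ((gam_int d (‖x‖^2+t^2) (by positivity)).const_mul
      (2 / √Real.pi ^ (d+1) * t * (snocVec d x t j * snocVec d x t k))).ofReal (𝕜 := ℂ)
    exact h.const_mul (ph d ξ x)
  · simp_rw [hn]
    simp_rw [kf_abs d t ht j k]
    exact (pE_int d t ht j k).abs

open scoped FourierTransform in
lemma kf_fourier (d : ℕ) (t : ℝ) (j k : Fin (d+1)) (ξ : Ed d) (v : ℝ) (hv : 0 < v) :
    ∫ x : Ed d, ph d ξ x * (kf d t j k x v : ℂ) =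
      ((2 * t / √Real.pi : ℝ) : ℂ) * (Mm d t v ξ j k * (jf t (Real.pi * ‖ξ‖) (1/2) v : ℂ)) := by
  have h := FM d t v hv j k ξ
  have hg := gh_real d v hv t ξ
  have hp : (√Real.pi : ℝ) ≠ 0 := (Real.sqrt_pos.2 Real.pi_pos).ne'
  have e : ∀ x : Ed d, ph d ξ x * (kf d t j k x v : ℂ) =
      ((2 / √Real.pi ^ (d+1) * t : ℝ) : ℂ) * ((v ^ (((d:ℝ)+1)/2) * Real.exp (-(t^2 * v)) : ℝ) : ℂ) *
      (ph d ξ x * ((snocVec d x t j : ℂ) * (snocVec d x t k : ℂ) * gs d v x)) := by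
    intro x
    have hgs : gs d v x = ((Real.exp (-(v * ‖x‖^2)) : ℝ) : ℂ) := by
      unfold gs; push_cast; congr 1; ring
    have : Real.exp (-((‖x‖^2 + t^2) * v)) = Real.exp (-(t^2 * v)) * Real.exp (-(v * ‖x‖^2)) := by
      rw [← Real.exp_add]; congr 1; ring
    unfold kf
    rw [hgs, this]
    simp only [Complex.ofReal_mul]
    ring
  simp_rw [e]
  rw [integral_const_mul]
  have h2 : ∫ x : Ed d, ph d ξ x * ((snocVec d x t j : ℂ) * (snocVec d x t k : ℂ) * gs d v x) =
      Mm d t v ξ j k * gh d v ξ := by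
    rw [← h, Real.fourier_eq']
    rfl
  rw [h2]
  have hc : ((2 * t / √Real.pi : ℝ) : ℂ) = ((2 / √Real.pi ^ (d+1) * t : ℝ) : ℂ) * ((√Real.pi ^ d : ℝ) : ℂ) := by
    rw [← Complex.ofReal_mul]
    congr 1
    field_simp
    ring
  rw [hc]
  linear_combination ((2 / √Real.pi ^ (d+1) * t : ℝ) : ℂ) * Mm d t v ξ j k * hg

open scoped FourierTransform in
lemma pE_fourier (d : ℕ) (t : ℝ) (ht : 0 < t) (j k : Fin (d+1)) (ξ : Ed d) (hξ : ξ ≠ 0) :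
    𝓕 (fun x => (pEntry d t j k x : ℂ)) ξ = Ee d t j k ξ := by
  rw [Real.fourier_eq']
  have h1 : ∀ x : Ed d, Complex.exp (((-2 * Real.pi * inner ℝ x ξ : ℝ) : ℂ) * Complex.I) •
      (pEntry d t j k x : ℂ) = ∫ v in Ioi (0:ℝ), ph d ξ x * (kf d t j k x v : ℂ) := by
    intro x
    rw [pE_rep d t ht, integral_const_mul, integral_complex_ofReal]
    rfl
  simp_rw [h1]
  rw [integral_integral_swap (kf_prod_int d t ht j k ξ),
    setIntegral_congr_fun measurableSet_Ioi (fun v hv => kf_fourier d t j k ξ v hv),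
    integral_const_mul, MJ d t ht j k ξ hξ]
  have hp : (√Real.pi : ℝ) ≠ 0 := (Real.sqrt_pos.2 Real.pi_pos).ne'
  have hp' : ((√Real.pi : ℝ) : ℂ) ≠ 0 := by exact_mod_cast hp
  have htc : (t:ℂ) ≠ 0 := by exact_mod_cast ht.ne'
  push_cast
  field_simp

lemma wv_norm (d : ℕ) (ξ : Ed d) (j : Fin (d+1)) : ‖wv d ξ j‖ ≤ Real.pi * ‖ξ‖ := by
  induction j using Fin.lastCases with
  | last =>
    simp only [wv, Fin.lastCases_last]
    rw [Complex.norm_real, Real.norm_of_nonneg (by positivity)]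
  | cast i =>
    simp only [wv, Fin.lastCases_castSucc]
    simp only [norm_mul, norm_neg, Complex.norm_I, Complex.norm_real, one_mul,
      Real.norm_of_nonneg Real.pi_pos.le]
    exact mul_le_mul_of_nonneg_left (coord_le ξ i) Real.pi_pos.le

lemma Ee_norm (d : ℕ) (t : ℝ) (ht : 0 < t) (j k : Fin (d+1)) (ξ : Ed d) :
    ‖Ee d t j k ξ‖ ≤ Real.exp (-2 * t * (Real.pi * ‖ξ‖)) * (1 + 2 * t * (Real.pi * ‖ξ‖)) := by
  unfold Ee
  rw [norm_mul, Complex.norm_real, Real.norm_of_nonneg (Real.exp_pos _).le]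
  refine mul_le_mul_of_nonneg_left ((norm_add_le _ _).trans (add_le_add ?_ ?_)) (Real.exp_pos _).le
  · split_ifs <;> simp
  · have h1 := wv_norm d ξ j
    have h2 := wv_norm d ξ k
    have hμ : 0 ≤ Real.pi * ‖ξ‖ := by positivity
    have h3 : ‖wv d ξ j * wv d ξ k‖ ≤ (Real.pi * ‖ξ‖) * (Real.pi * ‖ξ‖) := by
      rw [norm_mul]; exact mul_le_mul h1 h2 (norm_nonneg _) hμ
    have h4 : ‖(2 * t / ((Real.pi * ‖ξ‖ : ℝ) : ℂ) : ℂ)‖ = 2 * t / (Real.pi * ‖ξ‖) := by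
      rw [norm_div, norm_mul, Complex.norm_real, Complex.norm_real, Real.norm_of_nonneg hμ,
        Real.norm_of_nonneg ht.le]
      simp
    rw [norm_mul, h4]
    refine (mul_le_mul_of_nonneg_left h3 (by positivity)).trans ?_
    rcases hμ.eq_or_lt with h | h
    · rw [← h]; simp
    · rw [div_mul_eq_mul_div, div_le_iff₀ h]
      exact le_of_eq (by ring)

lemma exp_dom (n : ℕ) (a : ℝ) (ha : 0 < a) :
    ∃ C, ∀ r : ℝ, 0 ≤ r → Real.exp (-a * r) * (1 + a * r) ≤ C * (1 + r) ^ (-(n:ℝ)) := by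
  -- `(1 + a r) (1 + r)^n ≤ C exp (a r)`
  have hp := fun (s : ℝ) (hs : 0 ≤ s) => Real.pow_div_factorial_le_exp (x := s) hs (n+1)
  set b := min a 1 with hb
  have hb0 : 0 < b := lt_min ha one_pos
  have hba : b ≤ a := min_le_left _ _
  refine ⟨(1 + a) * ((n+1).factorial * b⁻¹ ^ (n+1) * Real.exp b), fun r hr => ?_⟩
  rw [Real.rpow_neg (by positivity), Real.rpow_natCast, ← div_eq_mul_inv, le_div_iff₀ (by positivity)]
  have h1 := hp (b * (1 + r)) (by positivity)
  rw [div_le_iff₀ (by positivity), mul_pow] at h1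
  have h2 : (1 + r) ^ (n+1) ≤ b⁻¹ ^ (n+1) * (Real.exp (b * (1 + r)) * (n+1).factorial) := by
    rw [inv_pow, inv_mul_eq_div, le_div_iff₀ (by positivity)]
    linarith
  have h3 : Real.exp (b * (1 + r)) ≤ Real.exp b * Real.exp (a * r) := by
    rw [← Real.exp_add]
    apply Real.exp_le_exp.2
    nlinarith
  have h4 : 1 + a * r ≤ (1 + a) * (1 + r) := by nlinarith
  have h5 : Real.exp (-a * r) * Real.exp (a * r) = 1 := by
    rw [← Real.exp_add]; simp
  calc Real.exp (-a * r) * (1 + a * r) * (1 + r)^n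
      ≤ Real.exp (-a * r) * ((1 + a) * (1 + r)) * (1 + r)^n := by gcongr
    _ = Real.exp (-a * r) * (1 + a) * (1 + r)^(n+1) := by ring
    _ ≤ Real.exp (-a * r) * (1 + a) * (b⁻¹ ^ (n+1) * (Real.exp b * Real.exp (a * r) * (n+1).factorial)) := by
        refine mul_le_mul_of_nonneg_left (h2.trans ?_) (by positivity)
        gcongr
    _ = (Real.exp (-a * r) * Real.exp (a * r)) * ((1 + a) * ((n+1).factorial * b⁻¹ ^ (n+1) * Real.exp b)) := by
        ring
    _ = _ := by rw [h5, one_mul]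

open scoped FourierTransform in
lemma pE_F_cont (d : ℕ) (t : ℝ) (ht : 0 < t) (j k : Fin (d+1)) :
    Continuous (𝓕 (fun x : Ed d => (pEntry d t j k x : ℂ))) :=
  VectorFourier.fourierIntegral_continuous Real.continuous_fourierChar
    (by exact continuous_inner) ((pE_int d t ht j k).ofReal)

open scoped FourierTransform in
lemma pE_F_int (d : ℕ) (t : ℝ) (ht : 0 < t) (hd : d ≠ 0) (j k : Fin (d+1)) :
    Integrable (𝓕 (fun x : Ed d => (pEntry d t j k x : ℂ))) := by
  obtain ⟨C, hC⟩ := exp_dom (d+1) (2 * t * Real.pi) (by positivity)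
  have hi : Integrable (fun ξ : Ed d => (1 + ‖ξ‖) ^ (-((d+1 : ℕ):ℝ))) :=
    integrable_one_add_norm (by simp)
  have : Nonempty (Fin d) := ⟨⟨0, Nat.pos_of_ne_zero hd⟩⟩
  refine (hi.const_mul C).mono' (pE_F_cont d t ht j k).aestronglyMeasurable ?_
  have h0 : ∀ᵐ ξ : Ed d, ξ ≠ 0 := by
    simp [ae_iff]
  filter_upwards [h0] with ξ hξ
  rw [pE_fourier d t ht j k ξ hξ]
  refine (Ee_norm d t ht j k ξ).trans ?_
  refine le_trans (le_of_eq ?_) (hC ‖ξ‖ (norm_nonneg _))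
  ring_nf


open scoped FourierTransform Convolution in
lemma main_pos (d : ℕ) (hd : d ≠ 0) (t₁ t₂ : ℝ) (ht₁ : 0 < t₁) (ht₂ : 0 < t₂)
    (x : Ed d) (j k : Fin (d + 1)) :
    (∑ ℓ : Fin (d + 1), ∫ y : Ed d, pEntry d t₁ j ℓ y * pEntry d t₂ ℓ k (x - y)) =
      pEntry d (t₁ + t₂) j k x := by
  have : Nonempty (Fin d) := ⟨⟨0, Nat.pos_of_ne_zero hd⟩⟩
  let P : ℝ → Fin (d+1) → Fin (d+1) → Ed d → ℂ := fun t j k x => (pEntry d t j k x : ℂ)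
  have hPi : ∀ t, 0 < t → ∀ j k, Integrable (P t j k) := fun t ht j k =>
    (pE_int d t ht j k).ofReal
  have hPc : ∀ t, 0 < t → ∀ j k, Continuous (P t j k) := fun t ht j k =>
    Complex.continuous_ofReal.comp (pE_cont d t ht j k)
  let G : Fin (d+1) → Ed d → ℂ := fun l => P t₁ j l ⋆[ContinuousLinearMap.mul ℂ ℂ] P t₂ l k
  have hGi : ∀ l, Integrable (G l) := fun l =>
    (hPi t₁ ht₁ j l).integrable_convolution _ (hPi t₂ ht₂ l k)
  have hGc : ∀ l, Continuous (G l) := by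
    intro l
    refine BddAbove.continuous_convolution_right_of_integrable _ ?_ (hPi t₁ ht₁ j l) (hPc t₂ ht₂ l k)
    obtain ⟨C, hC⟩ := pE_bdd d t₂ ht₂ l k
    refine ⟨C, ?_⟩
    rintro _ ⟨y, rfl⟩
    simpa [P] using hC y
  let g : Ed d → ℂ := fun y => ∑ l, G l y
  have hgi : Integrable g := integrable_finsetSum _ fun l _ => hGi l
  have hgc : Continuous g := continuous_finsetSum _ fun l _ => hGc l
  have hFg : ∀ ξ, 𝓕 g ξ = ∑ l, 𝓕 (P t₁ j l) ξ * 𝓕 (P t₂ l k) ξ := by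
    intro ξ
    have h1 : 𝓕 g ξ = ∑ l, 𝓕 (G l) ξ := by
      simp only [Real.fourier_eq', g, Finset.smul_sum]
      rw [integral_finsetSum]
      intro l _
      refine (hGi l).bdd_mul (c := 1) (ph_cont d ξ).aestronglyMeasurable (ae_of_all _ fun y => ?_)
      exact (ph_norm d ξ y).le
    rw [h1]
    refine Finset.sum_congr rfl fun l _ => ?_
    exact Real.fourier_mul_convolution_eq (hPi t₁ ht₁ j l) (hPi t₂ ht₂ l k) ξ
  have h0 : ∀ᵐ ξ : Ed d, ξ ≠ 0 := by simp [ae_iff]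
  have hae : 𝓕 g =ᵐ[volume] 𝓕 (P (t₁ + t₂) j k) := by
    filter_upwards [h0] with ξ hξ
    rw [hFg]
    simp only [P]
    rw [pE_fourier d _ (by positivity) j k ξ hξ, ← Ee_semigroup]
    refine Finset.sum_congr rfl fun l _ => ?_
    rw [pE_fourier d _ ht₁ j l ξ hξ, pE_fourier d _ ht₂ l k ξ hξ]
  have hF12 : Integrable (𝓕 (P (t₁ + t₂) j k)) := pE_F_int d _ (by positivity) hd j k
  have e1 := hgc.fourierInv_fourier_eq hgi (hF12.congr hae.symm)
  have e2 := (hPc (t₁+t₂) (by positivity) j k).fourierInv_fourier_eq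
    (hPi (t₁+t₂) (by positivity) j k) hF12
  have e3 : 𝓕⁻ (𝓕 g) x = 𝓕⁻ (𝓕 (P (t₁ + t₂) j k)) x := by
    rw [Real.fourierInv_eq', Real.fourierInv_eq']
    refine integral_congr_ae ?_
    filter_upwards [hae] with ξ hξ
    rw [hξ]
  rw [e1, e2] at e3
  have e4 : g x = ((∑ ℓ : Fin (d + 1), ∫ y : Ed d, pEntry d t₁ j ℓ y * pEntry d t₂ ℓ k (x - y) : ℝ) : ℂ) := by
    simp only [g, G, P, convolution_def]
    push_cast
    refine Finset.sum_congr rfl fun l _ => ?_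
    rw [← integral_complex_ofReal]
    simp
  rw [e4] at e3
  exact Complex.ofReal_injective e3

lemma main_zero (t₁ t₂ : ℝ) (ht₁ : 0 < t₁) (ht₂ : 0 < t₂)
    (x : Ed 0) (j k : Fin (0 + 1)) :
    (∑ ℓ : Fin (0 + 1), ∫ y : Ed 0, pEntry 0 t₁ j ℓ y * pEntry 0 t₂ ℓ k (x - y)) =
      pEntry 0 (t₁ + t₂) j k x := by
  have h : ∀ t : ℝ, 0 < t → ∀ (j k : Fin (0+1)) (x : Ed 0), pEntry 0 t j k x = 1 := by
    intro t ht j k x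
    have hj : j = Fin.last 0 := Fin.ext (by omega)
    have hk : k = Fin.last 0 := Fin.ext (by omega)
    have hx : x = 0 := Subsingleton.elim _ _
    subst hj hk hx
    have hg : Real.Gamma (3/2) = √Real.pi / 2 := by
      have := Real.Gamma_add_one (s := 1/2) (by norm_num)
      rw [Real.Gamma_one_half_eq] at this
      rw [show (3/2:ℝ) = 1/2+1 by norm_num, this]; ring
    unfold pEntry
    rw [const_eq, snoc_last]
    have hp : (√Real.pi : ℝ) ≠ 0 := (Real.sqrt_pos.2 Real.pi_pos).ne'
    have h3 : (t^2) ^ ((3:ℝ)/2) = t^3 := by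
      rw [← Real.rpow_natCast t 2, ← Real.rpow_mul ht.le]
      norm_num
    simp only [CharP.cast_eq_zero, zero_add, norm_zero, pow_one, ne_eq, OfNat.ofNat_ne_zero,
      not_false_eq_true, zero_pow]
    rw [hg, h3]
    field_simp
  rw [h _ (by positivity), Fin.sum_univ_castSucc]
  have hv : (volume : Measure (Ed 0)) univ = 1 := by
    have := (EuclideanSpace.volume_preserving_symm_measurableEquiv_toLp (Fin 0)).measure_preimage
      (s := univ) MeasurableSet.univ.nullMeasurableSet
    rw [preimage_univ] at this
    rw [this]
    simp [volume_pi]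
  simp only [h _ ht₁, h _ ht₂]
  simp [Measure.real, hv]


/-- **Semigroup property of the Poisson-type kernel.** For all `t₁, t₂ > 0`,
`ℙ_{t₁} ∗ ℙ_{t₂} = ℙ_{t₁+t₂}`, the convolution taken in the sense of matrix multiplication:
for every `x` and all indices `j, k`,
`Σ_ℓ ∫ 𝔭_{t₁}^{jℓ}(y) 𝔭_{t₂}^{ℓk}(x−y) dy = 𝔭_{t₁+t₂}^{jk}(x)`. -/
theorem pKernel_semigroup (d : ℕ) (t₁ t₂ : ℝ) (ht₁ : 0 < t₁) (ht₂ : 0 < t₂)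
    (x : Ed d) (j k : Fin (d + 1)) :
    (∑ ℓ : Fin (d + 1), ∫ y : Ed d, pEntry d t₁ j ℓ y * pEntry d t₂ ℓ k (x - y)) =
      pEntry d (t₁ + t₂) j k x := by
  rcases Nat.eq_zero_or_pos d with rfl | hd
  · exact main_zero t₁ t₂ ht₁ ht₂ x j k
  · exact main_pos d hd.ne' t₁ t₂ ht₁ ht₂ x j k
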